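/- arXiv:2602.21040 — 3 statements merged into one kernel-verified Lean document; each statement's English description precedes it below -/
import Mathlib

section
/- Let p and q be real numbers with 2 < p < q, and let δ > 0. Set C(δ) = ((q−p)/(q−2))·((p−2)/(δ(q−2)))^{(p−2)/(q−p)}. Then for every real number a > 0, one has a^p ≤ C(δ)·a^2 + δ·a^q, where powers with real exponents are real powers. -/
/-!
`a ^ p` is a weighted geometric mean of `a ^ r` and `a ^ q`. Scaling the two factors by amounts that
cancel in this mean, weighted AM-GM gives a family of bounds by linear combinations of `a ^ r` and
`a ^ q`; prescribing the coefficient `δ` of `a ^ q` selects the scale, and with it the constant.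
-/

section Young

variable {w₁ w₂ x y δ : ℝ}

theorem rpow_mul_rpow_le_const_mul_add_mul (hw₁ : 0 < w₁) (hw₂ : 0 < w₂) (hw : w₁ + w₂ = 1)
    (hδ : 0 < δ) (hx : 0 ≤ x) (hy : 0 ≤ y) :
    x ^ w₁ * y ^ w₂ ≤ w₁ * (w₂ / δ) ^ (w₂ / w₁) * x + δ * y := by
  have hK : 0 < w₂ / δ := by positivity
  have scale_cancel : ((w₂ / δ) ^ (w₂ / w₁)) ^ w₁ * ((w₂ / δ)⁻¹) ^ w₂ = 1 := by
    rw [← Real.rpow_mul hK.le, div_mul_cancel₀ _ hw₁.ne', Real.inv_rpow hK.le,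
      mul_inv_cancel₀ (Real.rpow_pos_of_pos hK _).ne']
  calc x ^ w₁ * y ^ w₂
      = (((w₂ / δ) ^ (w₂ / w₁)) ^ w₁ * ((w₂ / δ)⁻¹) ^ w₂) * (x ^ w₁ * y ^ w₂) := by
        rw [scale_cancel, one_mul]
    _ = ((w₂ / δ) ^ (w₂ / w₁) * x) ^ w₁ * ((w₂ / δ)⁻¹ * y) ^ w₂ := by
        rw [Real.mul_rpow (by positivity) hx, Real.mul_rpow (by positivity) hy, mul_mul_mul_comm]
    _ ≤ w₁ * ((w₂ / δ) ^ (w₂ / w₁) * x) + w₂ * ((w₂ / δ)⁻¹ * y) :=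
        Real.geom_mean_le_arith_mean2_weighted hw₁.le hw₂.le (by positivity) (by positivity) hw
    _ = w₁ * (w₂ / δ) ^ (w₂ / w₁) * x + δ * y := by
        rw [mul_assoc, inv_div, ← mul_assoc w₂, mul_div_cancel₀ _ hw₂.ne']

end Young

section Interpolation

variable {r p q δ a : ℝ}

theorem rpow_eq_rpow_mul_rpow_of_ne (hrq : r ≠ q) (ha : 0 < a) :
    a ^ p = (a ^ r) ^ ((q - p) / (q - r)) * (a ^ q) ^ ((p - r) / (q - r)) := by
  have hqr : q - r ≠ 0 := sub_ne_zero.2 hrq.symm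
  rw [← Real.rpow_mul ha.le, ← Real.rpow_mul ha.le, ← Real.rpow_add ha]
  congr 1
  field_simp
  ring

theorem rpow_interpolation_optimal_constant_general (hrp : r < p) (hpq : p < q) (hδ : 0 < δ)
    (ha : 0 < a) :
    a ^ p ≤ ((q - p) / (q - r)) * ((p - r) / (δ * (q - r))) ^ ((p - r) / (q - p)) * a ^ r
      + δ * a ^ q := by
  have hpr : 0 < p - r := sub_pos.2 hrp
  have hqp : 0 < q - p := sub_pos.2 hpq
  have hqr : 0 < q - r := sub_pos.2 (hrp.trans hpq)
  have weights_add : (q - p) / (q - r) + (p - r) / (q - r) = 1 := by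
    rw [← add_div, sub_add_sub_cancel, div_self hqr.ne']
  have young := rpow_mul_rpow_le_const_mul_add_mul (div_pos hqp hqr) (div_pos hpr hqr)
    weights_add hδ (Real.rpow_nonneg ha.le r) (Real.rpow_nonneg ha.le q)
  rwa [← rpow_eq_rpow_mul_rpow_of_ne (hrp.trans hpq).ne ha, div_div_div_cancel_right₀ hqr.ne',
    div_div, mul_comm (q - r) δ] at young

end Interpolation

theorem rpow_interpolation_optimal_constant (p q δ : ℝ) (hp : 2 < p) (hpq : p < q)
    (hδ : 0 < δ) :
    ∀ a : ℝ, 0 < a →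
      a ^ p ≤ ((q - p) / (q - 2)) * ((p - 2) / (δ * (q - 2))) ^ ((p - 2) / (q - p)) * a ^ (2 : ℝ)
        + δ * a ^ q :=
  fun _ ha => rpow_interpolation_optimal_constant_general hp hpq hδ ha
end

section
/- Assume additionally λ₁ < 0, λ₂ < 0, α₁ < 4 < α₂, and let M ≥ 0 and C, δ > 0 be real numbers such that N₁ ≤ C·M + δ·N₃ and δ·|λ₁|·(α₂−α₁)/(α₁+2) ≤ |λ₃|·(α₃−α₂)/(α₃+2). Then Y ≥ ((α₂ − 4)/2)·G − (|λ₁|·C·(α₂−α₁)/(α₁+2))·M − α₂·E. -/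
/-!
In `Y + β * E` the `i`-th power enters with the factor `β - αᵢ`. For `β = α₂` the middle power drops
out. By the interpolation inequality the lowest power costs at most a multiple of the mass plus a
multiple of `N₃`, and the smallness of `δ` says that this multiple of `N₃` is paid for by the
highest, focusing power.
-/

section Functionals

variable {ι : Type*} [Fintype ι]

/-- The energy of a solution `u` of a one-dimensional NLS equation with nonlinearities
`λᵢ|u|^{αᵢ}u`. Here `G` stands for `‖u_x‖²`, `N i` for the `(αᵢ + 2)`-th power of the
`L^{αᵢ+2}` norm of `u`, and `w i` for the weight `λᵢ / (αᵢ + 2)`. -/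
noncomputable def nlsEnergy (G : ℝ) (w N : ι → ℝ) : ℝ :=
  G / 2 + ∑ i, w i * N i

/-- The quantity `Y` of the virial identity `V_tt = -4Y` for the same equation, in the notation of
`nlsEnergy`. -/
def nlsVirial (G : ℝ) (α w N : ι → ℝ) : ℝ :=
  -2 * G - ∑ i, α i * (w i * N i)

theorem nlsVirial_eq_sub_mul_nlsEnergy (G : ℝ) (α w N : ι → ℝ) (β : ℝ) :
    nlsVirial G α w N =
      (β - 4) / 2 * G + ∑ i, (β - α i) * (w i * N i) - β * nlsEnergy G w N := by
  simp only [nlsVirial, nlsEnergy, sub_mul, Finset.sum_sub_distrib, ← Finset.mul_sum]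
  ring

end Functionals

theorem mul_le_mul_add_mul_of_le_add_mul {R : Type*} [CommSemiring R] [PartialOrder R]
    [IsOrderedRing R] {k K x y b δ : R} (hk : 0 ≤ k) (hy : 0 ≤ y)
    (hx : x ≤ b + δ * y) (hδ : δ * k ≤ K) : k * x ≤ k * b + K * y :=
  calc
    k * x ≤ k * (b + δ * y) := mul_le_mul_of_nonneg_left hx hk
    _ = k * b + δ * k * y := by ring
    _ ≤ k * b + K * y := by gcongr

theorem le_nlsVirial_of_interpolation (G : ℝ) (α w N : Fin 3 → ℝ) {b δ : ℝ}
    (hα : α 0 ≤ α 1) (hw : w 2 ≤ 0) (hN₀ : 0 ≤ N 0) (hN₂ : 0 ≤ N 2)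
    (hinterp : N 0 ≤ b + δ * N 2)
    (hδ : δ * (|w 0| * (α 1 - α 0)) ≤ |w 2| * (α 2 - α 1)) :
    (α 1 - 4) / 2 * G - |w 0| * (α 1 - α 0) * b - α 1 * nlsEnergy G w N ≤
      nlsVirial G α w N := by
  have hgap : 0 ≤ α 1 - α 0 := sub_nonneg.mpr hα
  have lowest_power : -(|w 0| * (α 1 - α 0) * N 0) ≤ (α 1 - α 0) * (w 0 * N 0) := by
    have := mul_le_mul_of_nonneg_left (neg_abs_le (w 0)) (mul_nonneg hgap hN₀)
    linarith
  have highest_power : (α 1 - α 2) * (w 2 * N 2) = |w 2| * (α 2 - α 1) * N 2 := by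
    rw [abs_of_nonpos hw]
    ring
  have absorption : |w 0| * (α 1 - α 0) * N 0 ≤
      |w 0| * (α 1 - α 0) * b + |w 2| * (α 2 - α 1) * N 2 :=
    mul_le_mul_add_mul_of_le_add_mul (mul_nonneg (abs_nonneg _) hgap) hN₂ hinterp hδ
  rw [nlsVirial_eq_sub_mul_nlsEnergy G α w N (α 1), Fin.sum_univ_three]
  linarith

theorem virial_case2B_general
    {G N₁ N₂ N₃ : ℝ} (hN₁ : 0 ≤ N₁) (hN₃ : 0 ≤ N₃)
    {l₁ l₂ l₃ : ℝ} (hl₃ : l₃ ≤ 0)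
    {α₁ α₂ α₃ : ℝ} (hα₁ : -2 < α₁) (h₁₂ : α₁ ≤ α₂) (hα₃ : -2 < α₃)
    {E Y : ℝ}
    (hE : E = G / 2 + l₁ * N₁ / (α₁ + 2) + l₂ * N₂ / (α₂ + 2) + l₃ * N₃ / (α₃ + 2))
    (hY : Y = -2 * G - l₁ * α₁ * N₁ / (α₁ + 2) - l₂ * α₂ * N₂ / (α₂ + 2)
      - l₃ * α₃ * N₃ / (α₃ + 2))
    {M C δ : ℝ} (hinterp : N₁ ≤ C * M + δ * N₃)
    (hδsmall : δ * |l₁| * (α₂ - α₁) / (α₁ + 2) ≤ |l₃| * (α₃ - α₂) / (α₃ + 2)) :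
    Y ≥ ((α₂ - 4) / 2) * G - (|l₁| * C * (α₂ - α₁) / (α₁ + 2)) * M - α₂ * E := by
  let α := ![α₁, α₂, α₃]
  let w := ![l₁ / (α₁ + 2), l₂ / (α₂ + 2), l₃ / (α₃ + 2)]
  let N := ![N₁, N₂, N₃]
  have hE' : E = nlsEnergy G w N := by
    simp only [hE, nlsEnergy, Fin.sum_univ_three, w, N, Matrix.cons_val]
    ring
  have hY' : Y = nlsVirial G α w N := by
    simp only [hY, nlsVirial, Fin.sum_univ_three, α, w, N, Matrix.cons_val]
    ring
  have hpos₁ : 0 < α₁ + 2 := by linarith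
  have hpos₃ : 0 < α₃ + 2 := by linarith
  have hw₁ : |w 0| = |l₁| / (α₁ + 2) := (abs_div _ _).trans (by rw [abs_of_pos hpos₁])
  have hw₃ : |w 2| = |l₃| / (α₃ + 2) := (abs_div _ _).trans (by rw [abs_of_pos hpos₃])
  have hδ : δ * (|w 0| * (α₂ - α₁)) ≤ |w 2| * (α₃ - α₂) := by
    rw [hw₁, hw₃]
    convert hδsmall using 1 <;> ring
  calc
    Y = nlsVirial G α w N := hY'
    _ ≥ (α₂ - 4) / 2 * G - |w 0| * (α₂ - α₁) * (C * M) - α₂ * nlsEnergy G w N :=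
      le_nlsVirial_of_interpolation G α w N h₁₂
        (div_nonpos_of_nonpos_of_nonneg hl₃ hpos₃.le) hN₁ hN₃ hinterp hδ
    _ = (α₂ - 4) / 2 * G - (|l₁| * C * (α₂ - α₁) / (α₁ + 2)) * M - α₂ * E := by
      rw [hE', hw₁]
      ring

theorem virial_case2B
    (G N₁ N₂ N₃ : ℝ) (hG : 0 ≤ G) (hN₁ : 0 ≤ N₁) (hN₂ : 0 ≤ N₂) (hN₃ : 0 ≤ N₃)
    (l₁ l₂ l₃ : ℝ) (hl₃ : l₃ < 0)
    (α₁ α₂ α₃ : ℝ) (hα₁ : 0 < α₁) (h₁₂ : α₁ < α₂) (h₂₃ : α₂ < α₃)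
    (E Y : ℝ)
    (hE : E = G / 2 + l₁ * N₁ / (α₁ + 2) + l₂ * N₂ / (α₂ + 2) + l₃ * N₃ / (α₃ + 2))
    (hY : Y = -2 * G - l₁ * α₁ * N₁ / (α₁ + 2) - l₂ * α₂ * N₂ / (α₂ + 2) - l₃ * α₃ * N₃ / (α₃ + 2))
    (hl₁ : l₁ < 0) (hl₂ : l₂ < 0) (hα₁4 : α₁ < 4) (h4α₂ : 4 < α₂)
    (M C δ : ℝ) (hM : 0 ≤ M) (hC : 0 < C) (hδ : 0 < δ)
    (hinterp : N₁ ≤ C * M + δ * N₃)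
    (hδsmall : δ * |l₁| * (α₂ - α₁) / (α₁ + 2) ≤ |l₃| * (α₃ - α₂) / (α₃ + 2)) :
    Y ≥ ((α₂ - 4) / 2) * G - (|l₁| * C * (α₂ - α₁) / (α₁ + 2)) * M - α₂ * E :=
  virial_case2B_general hN₁ hN₃ hl₃.le (by linarith) h₁₂.le (by linarith) hE hY hinterp hδsmall
end

section
/- For every Schwartz function u : ℝ → ℂ, one has (1/4)·(∫_ℝ |u(x)|² dx)² + (Im ∫_ℝ x·u'(x)·conj(u(x)) dx)² ≤ (∫_ℝ x²·|u(x)|² dx)·(∫_ℝ |u'(x)|² dx). -/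
open MeasureTheory Complex

/-!
Since `x|u|²` has derivative `|u|² + 2 x Re(ū u')`, integrating over the line gives
`Re ∫ x ū u' = -(1/2) ∫ |u|²`. The left-hand side of the inequality is therefore `|∫ x ū u'|²`,
the real part contributing the mass term, and the Cauchy-Schwarz inequality in `L²` for the pair
`x u`, `u'` bounds it by the right-hand side.
-/

section CauchySchwarz

theorem norm_toLp_two_sq {α F : Type*} [NormedAddCommGroup F] {m : MeasurableSpace α}
    {μ : Measure α} {f : α → F} (hf : MemLp f 2 μ) :
    ‖hf.toLp f‖ ^ 2 = ∫ a, ‖f a‖ ^ 2 ∂μ := by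
  have hint_nonneg : 0 ≤ ∫ a, ‖f a‖ ^ 2 ∂μ := integral_nonneg fun _ ↦ by positivity
  rw [Lp.norm_toLp, hf.eLpNorm_eq_integral_rpow_norm two_ne_zero ENNReal.ofNat_ne_top]
  simp only [ENNReal.toReal_ofNat, Real.rpow_ofNat, ← one_div, ← Real.sqrt_eq_rpow]
  rw [ENNReal.toReal_ofReal (Real.sqrt_nonneg _), Real.sq_sqrt hint_nonneg]

variable {α 𝕜 E : Type*} [RCLike 𝕜] [NormedAddCommGroup E] [InnerProductSpace 𝕜 E]
  {m : MeasurableSpace α} {μ : Measure α} {f g : α → E}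

theorem integrable_inner_of_memLp_two (hf : MemLp f 2 μ) (hg : MemLp g 2 μ) :
    Integrable (fun a ↦ inner 𝕜 (f a) (g a)) μ := by
  refine (L2.integrable_inner (hf.toLp f) (hg.toLp g)).congr ?_
  filter_upwards [hf.coeFn_toLp, hg.coeFn_toLp] with a hfa hga
  rw [hfa, hga]

theorem integrable_mul_inner_of_memLp_two {w : α → ℝ} (hwf : MemLp (fun a ↦ (w a : 𝕜) • f a) 2 μ)
    (hg : MemLp g 2 μ) : Integrable (fun a ↦ (w a : 𝕜) * inner 𝕜 (f a) (g a)) μ := by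
  simpa only [inner_smul_real_left, RCLike.real_smul_eq_coe_mul]
    using integrable_inner_of_memLp_two (𝕜 := 𝕜) hwf hg

theorem inner_toLp_eq_integral_inner (hf : MemLp f 2 μ) (hg : MemLp g 2 μ) :
    inner 𝕜 (hf.toLp f) (hg.toLp g) = ∫ a, inner 𝕜 (f a) (g a) ∂μ := by
  rw [L2.inner_def]
  refine integral_congr_ae ?_
  filter_upwards [hf.coeFn_toLp, hg.coeFn_toLp] with a hfa hga
  rw [hfa, hga]

theorem norm_integral_inner_sq_le (hf : MemLp f 2 μ) (hg : MemLp g 2 μ) :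
    ‖∫ a, inner 𝕜 (f a) (g a) ∂μ‖ ^ 2 ≤ (∫ a, ‖f a‖ ^ 2 ∂μ) * ∫ a, ‖g a‖ ^ 2 ∂μ := by
  rw [← inner_toLp_eq_integral_inner hf hg, ← norm_toLp_two_sq hf, ← norm_toLp_two_sq hg,
    ← mul_pow]
  gcongr
  exact norm_inner_le_norm _ _

end CauchySchwarz

theorem memLp_of_memLp_norm_mul_norm {X E : Type*} [NormedAddCommGroup X] [ProperSpace X]
    [MeasurableSpace X] [OpensMeasurableSpace X] {μ : Measure X} [IsFiniteMeasureOnCompacts μ]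
    [NormedAddCommGroup E] {p : ENNReal} {u : X → E} (hu : Continuous u)
    (hxu : MemLp (fun x ↦ ‖x‖ * ‖u x‖) p μ) : MemLp u p μ := by
  -- The tent `φ` makes up for the weight `‖x‖` being small near the origin.
  let φ : X → ℝ := fun x ↦ max 0 (1 - ‖x‖)
  have hφ : HasCompactSupport fun x ↦ φ x * ‖u x‖ := by
    refine .mul_right <| .intro (isCompact_closedBall 0 1) fun x hx ↦ max_eq_left ?_
    rw [mem_closedBall_zero_iff] at hx
    linarith
  have hφu : MemLp (fun x ↦ φ x * ‖u x‖) p μ :=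
    (by fun_prop : Continuous _).memLp_of_hasCompactSupport hφ
  refine (hφu.add hxu).mono hu.aestronglyMeasurable (.of_forall fun x ↦ ?_)
  have one_le : 1 ≤ φ x + ‖x‖ := by linarith [le_max_right 0 (1 - ‖x‖)]
  calc ‖u x‖ ≤ (φ x + ‖x‖) * ‖u x‖ := le_mul_of_one_le_left (norm_nonneg _) one_le
    _ = φ x * ‖u x‖ + ‖x‖ * ‖u x‖ := add_mul _ _ _
    _ ≤ ‖φ x * ‖u x‖ + ‖x‖ * ‖u x‖‖ := le_abs_self _

section Variance

variable {𝕜 E : Type*} [RCLike 𝕜] [NormedAddCommGroup E] [InnerProductSpace 𝕜 E]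
  [NormedSpace ℝ E]

theorem hasDerivAt_norm_sq_re_inner {u : ℝ → E} {v : E} {x : ℝ} (hu : HasDerivAt u v x) :
    HasDerivAt (fun y ↦ ‖u y‖ ^ 2) (2 * RCLike.re (inner 𝕜 (u x) v)) x := by
  have h := RCLike.reCLM.hasFDerivAt.comp_hasDerivAt x (hu.inner 𝕜 hu)
  simpa only [Function.comp_def, RCLike.reCLM_apply, inner_self_eq_norm_sq, map_add,
    inner_re_symm v, ← two_mul] using h

variable {u u' : ℝ → E}

theorem integral_mul_re_inner_deriv (hu : ∀ x, HasDerivAt u (u' x) x)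
    (hint : Integrable fun x ↦ ‖u x‖ ^ 2) (hint_mul : Integrable fun x ↦ x * ‖u x‖ ^ 2)
    (hint_deriv : Integrable fun x ↦ x * RCLike.re (inner 𝕜 (u x) (u' x))) :
    ∫ x, x * RCLike.re (inner 𝕜 (u x) (u' x)) = -(1 / 2) * ∫ x, ‖u x‖ ^ 2 := by
  have hderiv (x : ℝ) : HasDerivAt (fun y ↦ y * ‖u y‖ ^ 2)
      (‖u x‖ ^ 2 + 2 * (x * RCLike.re (inner 𝕜 (u x) (u' x)))) x :=
    ((hasDerivAt_id' x).mul (hasDerivAt_norm_sq_re_inner (𝕜 := 𝕜) (hu x))).congr_deriv (by ring)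
  have hzero := integral_eq_zero_of_hasDerivAt_of_integrable hderiv
    (hint.add (hint_deriv.const_mul 2)) hint_mul
  rw [integral_add hint (hint_deriv.const_mul 2), integral_const_mul] at hzero
  linarith

theorem re_integral_mul_inner_deriv (hu : ∀ x, HasDerivAt u (u' x) x)
    (hxu : MemLp (fun x : ℝ ↦ (x : 𝕜) • u x) 2) (hu' : MemLp u' 2) :
    RCLike.re (∫ x : ℝ, (x : 𝕜) * inner 𝕜 (u x) (u' x)) = -(1 / 2) * ∫ x, ‖u x‖ ^ 2 := by
  have hu_cont : Continuous u := continuous_iff_continuousAt.2 fun x ↦ (hu x).continuousAt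
  have hu_memLp : MemLp u 2 := memLp_of_memLp_norm_mul_norm hu_cont
    (by simpa only [norm_smul, RCLike.norm_ofReal, Real.norm_eq_abs] using hxu.norm)
  have hint_mul : Integrable fun x : ℝ ↦ x * ‖u x‖ ^ 2 := by
    simpa only [RCLike.re_ofReal_mul, inner_self_eq_norm_sq]
      using (integrable_mul_inner_of_memLp_two hxu hu_memLp).re
  have hint_deriv : Integrable fun x : ℝ ↦ x * RCLike.re (inner 𝕜 (u x) (u' x)) := by
    simpa only [RCLike.re_ofReal_mul] using (integrable_mul_inner_of_memLp_two hxu hu').re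
  rw [← integral_re (integrable_mul_inner_of_memLp_two hxu hu')]
  simp only [RCLike.re_ofReal_mul]
  exact integral_mul_re_inner_deriv hu (hu_memLp.integrable_norm_pow two_ne_zero) hint_mul
    hint_deriv

theorem uncertainty_principle_variance_general (hu : ∀ x, HasDerivAt u (u' x) x)
    (hxu : MemLp (fun x : ℝ ↦ (x : 𝕜) • u x) 2) (hu' : MemLp u' 2) :
    (1 / 4) * (∫ x : ℝ, ‖u x‖ ^ 2) ^ 2
      + (RCLike.im (∫ x : ℝ, (x : 𝕜) * inner 𝕜 (u x) (u' x))) ^ 2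
    ≤ (∫ x : ℝ, x ^ 2 * ‖u x‖ ^ 2) * ∫ x : ℝ, ‖u' x‖ ^ 2 :=
  calc _ = ‖∫ x : ℝ, (x : 𝕜) * inner 𝕜 (u x) (u' x)‖ ^ 2 := by
        rw [← RCLike.normSq_eq_def', RCLike.normSq_apply, re_integral_mul_inner_deriv hu hxu hu']
        ring
    _ = ‖∫ x : ℝ, inner 𝕜 ((x : 𝕜) • u x) (u' x)‖ ^ 2 := by
        simp only [inner_smul_real_left, RCLike.real_smul_eq_coe_mul]
    _ ≤ (∫ x : ℝ, ‖(x : 𝕜) • u x‖ ^ 2) * ∫ x : ℝ, ‖u' x‖ ^ 2 :=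
        norm_integral_inner_sq_le hxu hu'
    _ = _ := by
        simp only [norm_smul, RCLike.norm_ofReal, mul_pow, sq_abs]

end Variance

section Schwartz

variable {F : Type*} [NormedAddCommGroup F] [NormedSpace ℝ F] {p : ENNReal}

theorem memLp_smul_schwartzMap {D 𝕜 : Type*} [NormedAddCommGroup D] [NormedSpace ℝ D]
    [MeasurableSpace D] [OpensMeasurableSpace D] [SecondCountableTopologyEither D F] [RCLike 𝕜]
    [NormedSpace 𝕜 F] {μ : Measure D} [μ.HasTemperateGrowth] {g : D → 𝕜}
    (hg : g.HasTemperateGrowth) (f : SchwartzMap D F) : MemLp (fun x ↦ g x • f x) p μ := by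
  simpa only [SchwartzMap.smulLeftCLM_apply hg] using (SchwartzMap.smulLeftCLM F g f).memLp p μ

theorem memLp_deriv_schwartzMap {μ : Measure ℝ} [μ.HasTemperateGrowth] (f : SchwartzMap ℝ F) :
    MemLp (deriv f) p μ :=
  (SchwartzMap.derivCLM ℝ F f).memLp p μ

end Schwartz

theorem uncertainty_principle_variance (u : SchwartzMap ℝ ℂ) :
    (1 / 4) * (∫ x : ℝ, ‖u x‖ ^ 2) ^ 2
      + ((∫ x : ℝ, (x : ℂ) * deriv (⇑u) x * (starRingEnd ℂ) (u x)).im) ^ 2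
    ≤ (∫ x : ℝ, x ^ 2 * ‖u x‖ ^ 2) * ∫ x : ℝ, ‖deriv (⇑u) x‖ ^ 2 := by
  simpa only [RCLike.inner_apply, ← mul_assoc, RCLike.im_eq_complex_im,
    RCLike.ofReal_eq_complex_ofReal] using
    uncertainty_principle_variance_general (𝕜 := ℂ) u.hasDerivAt
      (memLp_smul_schwartzMap (by fun_prop) u) (memLp_deriv_schwartzMap u)
end
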